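/- Let n ≥ 4 and let f : ℤ₃ⁿ → ℤ₃ be a function depending on all of its variables. Identify each element u ∈ ℤ₃ with the singleton {u} in the Boolean group of subsets of ℤ₃ under symmetric difference ⊕. Then gap f = 2 if and only if there exist a, b, c, d ∈ ℤ₃, and these are uniquely determined by f, such that with p(x) = a·x² + b·x + c (operations in the field ℤ₃): if n ≡ 0 (mod 4), then {f(x)} = ⊕_{1≤i<j≤n} {(x_i − x_j)²·p(x_i + x_j) + d} ⊕ {d}; if n ≡ 1 (mod 4), then {f(x)} = ⊕_{1≤i<j≤n} {(x_i − x_j)²·p(x_i + x_j) + d} ⊕ ⊕_{i=1}^n {p(x_i) + d}; if n ≡ 2 (mod 4), then {f(x)} = ⊕_{1≤i<j≤n} {(x_i − x_j)²·p(x_i + x_j) + d}; if n ≡ 3 (mod 4), then {f(x)} = ⊕_{1≤i<j≤n} {(x_i − x_j)²·p(x_i + x_j) + d} ⊕ ⊕_{i=1}^n {p(x_i) + d} ⊕ {d}, for all x ∈ ℤ₃ⁿ. Otherwise gap f = 1. -/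

import Mathlib

open Finset

section Defs

variable {A B : Type*}

/-- The `i`-th variable is essential in `f`. -/
def essentialAt {n : ℕ} (f : (Fin n → A) → B) (i : Fin n) : Prop :=
  ∃ x x' : Fin n → A, (∀ k, k ≠ i → x k = x' k) ∧ f x ≠ f x'

/-- The essential arity of `f`: the number of its essential variables. -/
noncomputable def essArity {n : ℕ} (f : (Fin n → A) → B) : ℕ :=
  Nat.card {i : Fin n // essentialAt f i}

/-- The identification minor `f_{i ← j}`. -/
def idMinor {n : ℕ} (f : (Fin n → A) → B) (i j : Fin n) : (Fin n → A) → B :=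
  fun x => f (Function.update x i (x j))

/-- The arity gap of `f`. -/
noncomputable def arityGap {n : ℕ} (f : (Fin n → A) → B) : ℕ :=
  sInf {d : ℕ | ∃ i j : Fin n, i ≠ j ∧ essentialAt f i ∧ essentialAt f j ∧
    d = essArity f - essArity (idMinor f i j)}

/-- `oddsupp x` is the set of elements occurring an odd number of times in `x`. -/
def oddsupp {n : ℕ} [DecidableEq A] (x : Fin n → A) : Finset A :=
  (Finset.univ.image x).filter fun a => Odd ((Finset.univ.filter fun j => x j = a).card)

/-- `f` is determined by `oddsupp`. -/
def DeterminedByOddsupp {n : ℕ} [DecidableEq A] (f : (Fin n → A) → B) : Prop :=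
  ∃ φ : Finset A → B, ∀ x, f x = φ (oddsupp x)

/-- `oddsuppOn I x = oddsupp (x|_I)`. -/
def oddsuppOn {n : ℕ} [DecidableEq A] (I : Finset (Fin n)) (x : Fin n → A) : Finset A :=
  (I.image x).filter fun a => Odd ((I.filter fun j => x j = a).card)

/-- `f` is `k`-decomposable: a sum of functions with at most `k` essential variables. -/
def KDecomposable {n : ℕ} [AddCommMonoid B] (k : ℕ) (f : (Fin n → A) → B) : Prop :=
  ∃ (s : ℕ) (g : Fin s → (Fin n → A) → B),
    (∀ i, essArity (g i) ≤ k) ∧ ∀ x, f x = ∑ i, g i x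

/-- Partial derivative of `f` with respect to its `i`-th variable with parameter `a`. -/
def pDeriv {n : ℕ} [AddCommGroup B] (f : (Fin n → A) → B) (i : Fin n) (a : A) :
    (Fin n → A) → B :=
  fun x => f (Function.update x i a) - f x

/-- Higher-order partial derivative `Δ_I^a f`. -/
def pDerivFin {n : ℕ} [AddCommGroup B] (f : (Fin n → A) → B) (I : Finset (Fin n))
    (a : Fin n → A) : (Fin n → A) → B :=
  (I.sort (· ≤ ·)).foldr (fun i g => pDeriv g i (a i)) f

/-- `updateOn x J a` is the tuple `x_J^a`. -/
def updateOn {n : ℕ} (x : Fin n → A) (J : Finset (Fin n)) (a : Fin n → A) : Fin n → A :=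
  fun k => if k ∈ J then a k else x k

/-- `g` is a simple minor of `f`. -/
def IsSimpleMinor {n m : ℕ} (g : (Fin m → A) → B) (f : (Fin n → A) → B) : Prop :=
  ∃ σ : Fin n → Fin m, ∀ x : Fin m → A, g x = f (x ∘ σ)

/-- `f` and `g` are equivalent: each is a simple minor of the other. -/
def FnEquiv {n m : ℕ} (f : (Fin n → A) → B) (g : (Fin m → A) → B) : Prop :=
  IsSimpleMinor g f ∧ IsSimpleMinor f g

end Defs

/-- The embedding of `ℤ₃` into the Boolean group of subsets of `ℤ₃` under symmetric
difference, sending `u` to the singleton `{u}`. -/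
def sing (u : ZMod 3) : AsBoolRing (Set (ZMod 3)) :=
  toBoolRing ({u} : Set (ZMod 3))

/-- The decomposition condition for functions `f : ℤ₃ⁿ → ℤ₃`, with parameters
`q = (a, b, c, d)` and `p(x) = a·x² + b·x + c`, expressed in the Boolean group of
subsets of `ℤ₃` under symmetric difference (which is the addition of
`AsBoolRing (Set (ZMod 3))`). -/
def z3Cond {n : ℕ} (f : (Fin n → ZMod 3) → ZMod 3)
    (q : ZMod 3 × ZMod 3 × ZMod 3 × ZMod 3) : Prop :=
  let a := q.1; let b := q.2.1; let c := q.2.2.1; let d := q.2.2.2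
  let p : ZMod 3 → ZMod 3 := fun x => a * x ^ 2 + b * x + c
  let S2 : (Fin n → ZMod 3) → AsBoolRing (Set (ZMod 3)) := fun x =>
    ∑ i : Fin n, ∑ j ∈ Finset.univ.filter (fun j : Fin n => i < j),
      sing ((x i - x j) ^ 2 * p (x i + x j) + d)
  let S1 : (Fin n → ZMod 3) → AsBoolRing (Set (ZMod 3)) := fun x =>
    ∑ i : Fin n, sing (p (x i) + d)
  (n % 4 = 0 → ∀ x : Fin n → ZMod 3, sing (f x) = S2 x + sing d) ∧
  (n % 4 = 1 → ∀ x : Fin n → ZMod 3, sing (f x) = S2 x + S1 x) ∧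
  (n % 4 = 2 → ∀ x : Fin n → ZMod 3, sing (f x) = S2 x) ∧
  (n % 4 = 3 → ∀ x : Fin n → ZMod 3, sing (f x) = S2 x + S1 x + sing d)

/-!
A function of more than `|A|` variables meets a coincidence between two entries at every tuple, so
it is governed by its identification minors. If every minor `f_{i ← j}` ignores a variable besides
`i`, then `f` is invariant under replacing an equal pair of entries by another one: otherwise, among
the minors depending on the merged variable, take one with the fewest ignored variables. It yields
three variables such that `f`, on tuples with a coincidence among these entries, is either
majority-like, minority-like or a projection. The first two are excluded by a fourth variable, and a
projection makes one of the variables inessential. Invariance under replacing equal pairs means that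
`f x` depends only on `oddsupp x`, and some minor of such a function loses no third variable.

In a Boolean group, sums over the entries or over the pairs of entries of `x` depend only on
`oddsupp x`. For each parity of `n`, the formula on `ℤ₃` takes the value `d` at the set `∅` or `ℤ₃`,
and `p(t) + d` at the other subsets of that parity, which are indexed by their sums `t ∈ ℤ₃`. Since
every function `ℤ₃ → ℤ₃` has a unique quadratic interpolation, so do the four values of `f`.
-/

open Function

section IdentificationMinors

variable {n : ℕ} {A B : Type*} {f g : (Fin n → A) → B} {i j v : Fin n}

/-- For `v ∉ {i, j}`: the identification minor `f_{i ← j}` does not depend on the variable `v`.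
Stated on the tuples with `x i = x j`, so that it is symmetric in `i` and `j`. -/
def MinorIgnores (f : (Fin n → A) → B) (i j v : Fin n) : Prop :=
  ∀ x a, x i = x j → f (update x v a) = f x

/-- The identification minor `f_{i ← j}` does not depend on the variable `j` into which `i` was
merged. -/
def MinorIgnoresMerged (f : (Fin n → A) → B) (i j : Fin n) : Prop :=
  ∀ x a, x i = x j → f (update (update x i a) j a) = f x

/-- Replacing an equal pair of entries by another equal pair never changes the value of `f`. -/
def PairInvariant (f : (Fin n → A) → B) : Prop :=
  ∀ ⦃i j⦄, i ≠ j → MinorIgnoresMerged f i j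

theorem MinorIgnores.apply_eq (h : MinorIgnores f i j v) {x y : Fin n → A} (hx : x i = x j)
    (hxy : ∀ m, m ≠ v → x m = y m) : f x = f y := by
  rw [← h x (y v) hx]
  congr 1
  grind [update_apply]

theorem MinorIgnoresMerged.apply_eq (h : MinorIgnoresMerged f i j) {x y : Fin n → A}
    (hx : x i = x j) (hy : y i = y j) (hxy : ∀ m, m ≠ i → m ≠ j → x m = y m) : f x = f y := by
  rw [← h x (y i) hx]
  congr 1
  grind [update_apply]

theorem MinorIgnores.symm (h : MinorIgnores f i j v) : MinorIgnores f j i v :=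
  fun x a e => h x a e.symm

theorem MinorIgnoresMerged.symm (h : MinorIgnoresMerged f i j) : MinorIgnoresMerged f j i := by
  intro x a e
  exact h.apply_eq (by grind [update_apply]) e.symm (by grind [update_apply])

open Classical in
/-- The variables besides `i` and `j` on which the identification minor `f_{i ← j}` does not
depend. -/
noncomputable def ignoredVars (f : (Fin n → A) → B) (i j : Fin n) : Finset (Fin n) :=
  {v | v ≠ i ∧ v ≠ j ∧ MinorIgnores f i j v}

theorem mem_ignoredVars : v ∈ ignoredVars f i j ↔ v ≠ i ∧ v ≠ j ∧ MinorIgnores f i j v := by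
  simp [ignoredVars]

theorem ignoredVars_comm (f : (Fin n → A) → B) (i j : Fin n) :
    ignoredVars f i j = ignoredVars f j i := by
  ext v
  simp only [mem_ignoredVars]
  exact ⟨fun h => ⟨h.2.1, h.1, h.2.2.symm⟩, fun h => ⟨h.2.1, h.1, h.2.2.symm⟩⟩

/-- Every identification minor `f_{i ← j}` ignores some variable besides `i`. -/
def EveryMinorIgnores (f : (Fin n → A) → B) : Prop :=
  ∀ ⦃i j⦄, i ≠ j → MinorIgnoresMerged f i j ∨ (ignoredVars f i j).Nonempty

theorem not_essentialAt_iff : ¬ essentialAt f i ↔ ∀ x a, f (update x i a) = f x := by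
  constructor
  · intro h x a
    by_contra hne
    exact h ⟨update x i a, x, fun k hk => update_of_ne hk _ _, hne⟩
  · rintro h ⟨x, y, hxy, hne⟩
    have hy : y = update x i (y i) := by grind [update_apply]
    exact hne (by rw [hy, h])

theorem not_essentialAt_idMinor_left (hij : i ≠ j) : ¬ essentialAt (idMinor f i j) i := by
  rw [not_essentialAt_iff]
  intro x a
  simp [idMinor, hij.symm]

theorem not_essentialAt_idMinor_iff (hvi : v ≠ i) (hvj : v ≠ j) :
    ¬ essentialAt (idMinor f i j) v ↔ MinorIgnores f i j v := by
  simp only [not_essentialAt_iff, idMinor, update_of_ne hvj.symm, update_comm hvi]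
  refine ⟨fun h x a e => ?_, fun h x a => h _ a (by simp [update_apply])⟩
  simpa [← e] using h x a

theorem not_essentialAt_idMinor_right_iff (hij : i ≠ j) :
    ¬ essentialAt (idMinor f i j) j ↔ MinorIgnoresMerged f i j := by
  simp only [not_essentialAt_iff, idMinor, update_self, update_comm hij.symm]
  refine ⟨fun h x a e => ?_, fun h x a => ?_⟩
  · simpa [← e] using h x a
  · simpa using h (update x i (x j)) a (by simp [hij.symm])

theorem essArity_add_card_le {S : Finset (Fin n)} (h : ∀ v ∈ S, ¬ essentialAt g v) :
    essArity g + #S ≤ n := by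
  classical
  rw [essArity, Nat.subtype_card (univ.filter (essentialAt g)) (by simp),
    ← card_union_of_disjoint (by grind [disjoint_left])]
  exact card_finset_fin_le _

theorem le_essArity_add_card {S : Finset (Fin n)} (h : ∀ v ∉ S, essentialAt g v) :
    n ≤ essArity g + #S := by
  classical
  rw [essArity, Nat.subtype_card (univ.filter (essentialAt g)) (by simp)]
  calc n = #(univ : Finset (Fin n)) := (card_fin n).symm
    _ ≤ #(univ.filter (essentialAt g) ∪ S) := card_le_card fun v _ => by
        by_cases hv : v ∈ S <;> simp [hv, h]
    _ ≤ _ := card_union_le _ _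

theorem essArity_eq_of_forall_essentialAt (hdep : ∀ i, essentialAt f i) : essArity f = n :=
  le_antisymm (by simpa using essArity_add_card_le (S := ∅) (g := f) (by simp))
    (by simpa using le_essArity_add_card (S := ∅) fun v _ => hdep v)

theorem arityGap_eq_of_forall_le {c : ℕ} (hdep : ∀ i, essentialAt f i)
    (hle : ∀ i j, i ≠ j → essArity (idMinor f i j) + c ≤ n)
    (hex : ∃ i j, i ≠ j ∧ n ≤ essArity (idMinor f i j) + c) : arityGap f = c := by
  obtain ⟨i, j, hij, h⟩ := hex
  refine IsLeast.csInf_eq ⟨⟨i, j, hij, hdep i, hdep j, ?_⟩, ?_⟩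
  · rw [essArity_eq_of_forall_essentialAt hdep]
    have := hle i j hij
    omega
  · rintro d ⟨i, j, hij, -, -, rfl⟩
    rw [essArity_eq_of_forall_essentialAt hdep]
    have := hle i j hij
    omega

theorem essArity_idMinor_add_one_le (hij : i ≠ j) : essArity (idMinor f i j) + 1 ≤ n :=
  essArity_add_card_le (S := {i}) (by simpa using not_essentialAt_idMinor_left hij)

theorem le_essArity_idMinor_add_one (hij : i ≠ j) (hmerged : ¬ MinorIgnoresMerged f i j)
    (hother : ignoredVars f i j = ∅) : n ≤ essArity (idMinor f i j) + 1 := by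
  refine le_essArity_add_card (S := {i}) fun v hv => ?_
  rw [mem_singleton] at hv
  by_contra hess
  rcases eq_or_ne v j with rfl | hvj
  · exact hmerged ((not_essentialAt_idMinor_right_iff hij).1 hess)
  · exact notMem_empty v (hother ▸ mem_ignoredVars.2
      ⟨hv, hvj, (not_essentialAt_idMinor_iff hv hvj).1 hess⟩)

theorem essArity_idMinor_add_two_le (hij : i ≠ j) (hmerged : MinorIgnoresMerged f i j) :
    essArity (idMinor f i j) + 2 ≤ n := by
  rw [← card_pair hij]
  refine essArity_add_card_le fun v hv => ?_
  rw [mem_insert, mem_singleton] at hv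
  rcases hv with rfl | rfl
  · exact not_essentialAt_idMinor_left hij
  · exact (not_essentialAt_idMinor_right_iff hij).2 hmerged

theorem le_essArity_idMinor_add_two (hij : i ≠ j) (hother : ignoredVars f i j = ∅) :
    n ≤ essArity (idMinor f i j) + 2 := by
  rw [← card_pair hij]
  refine le_essArity_add_card fun v hv => ?_
  simp only [mem_insert, mem_singleton, not_or] at hv
  exact not_not.1 fun hess => notMem_empty v (hother ▸ mem_ignoredVars.2
    ⟨hv.1, hv.2, (not_essentialAt_idMinor_iff hv.1 hv.2).1 hess⟩)

end IdentificationMinors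

section Quaternary

variable {A C : Type*} {Φ : A → A → A → A → C}

/-- A quaternary operation `Φ` is *tame* if identifying its last two arguments makes it independent
of its first argument, of its second one, or of the merged one. -/
def TameAtLastPair (Φ : A → A → A → A → C) : Prop :=
  (∀ a a' b e, Φ a b e e = Φ a' b e e) ∨ (∀ a b b' e, Φ a b e e = Φ a b' e e) ∨
    ∀ a b c e, Φ a b c c = Φ a b e e

theorem TameAtLastPair.diagonal_const_of_majority (hΦ : TameAtLastPair Φ)
    (h₁₂ : ∀ a c e, Φ a a c e = Φ a a a e) (h₁₃ : ∀ a b e, Φ a b a e = Φ a a a e)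
    (h₂₃ : ∀ a b e, Φ a b b e = Φ b b b e) (a b e : A) : Φ a a a e = Φ b b b e := by
  rcases hΦ with h | h | h
  · have key : ∀ a, Φ a a a e = Φ e e e e := fun a => by rw [← h₁₂ a e, h a e a e, h₁₃]
    rw [key a, key b]
  · have key : ∀ a, Φ a a a e = Φ e e e e := fun a => by rw [← h₁₂ a e, h a a e e, h₂₃]
    rw [key a, key b]
  · have key : ∀ a, Φ a a a e = Φ a a a a := fun a => by rw [← h₁₂ a e, h a a e a]
    rw [key a, key b, ← h₁₃ a b, h a b a b, h₂₃]

theorem TameAtLastPair.diagonal_const_of_minority (hΦ : TameAtLastPair Φ)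
    (h₁₂ : ∀ a c e, Φ a a c e = Φ a a a e) (h₁₃ : ∀ a b e, Φ a b a e = Φ b b b e)
    (h₂₃ : ∀ a b e, Φ a b b e = Φ a a a e) (a b e : A) : Φ a a a e = Φ b b b e := by
  rcases hΦ with h | h | h
  · rw [← h₂₃ a e, h a b e e, h₂₃]
  · rw [← h₁₃ e a, h e a b e, h₁₃]
  · have key : ∀ a e, Φ a a a e = Φ a a a a := fun a e => by rw [← h₁₂ a e, h a a e a]
    rw [key a e, key b e, ← key a b, ← h₂₃ a b, h a b b a, h₁₃, key b a]

theorem TameAtLastPair.eq_diagonal_of_projection (hΦ : TameAtLastPair Φ)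
    (hconst : ¬ ∀ a b e, Φ a a a e = Φ b b b e)
    (h₁₂ : ∀ a c e, Φ a a c e = Φ a a a e) (h₁₃ : ∀ a b e, Φ a b a e = Φ a a a e)
    (h₂₃ : ∀ a b e, Φ a b b e = Φ a a a e) (a b e : A) : Φ a b e e = Φ a a a e := by
  rcases hΦ with h | h | h
  · exact absurd (fun a b e => by rw [← h₂₃ a e, h a b e e, h₂₃]) hconst
  · rw [h a b a e, h₁₂]
  · rw [h a b e a, h₁₃, ← h a a e a, h₁₂]

end Quaternary

section Willard

variable {n : ℕ} {A B : Type*} {f : (Fin n → A) → B} {i j k l v : Fin n}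

/-- Among the pairs whose minor depends on the merged variable, `(i, j)` is one with the fewest
ignored variables, and `k` is one of these. -/
structure ExtremalTriple (f : (Fin n → A) → B) (i j k : Fin n) : Prop where
  ne₁₂ : i ≠ j
  ne₁₃ : i ≠ k
  ne₂₃ : j ≠ k
  ignores : MinorIgnores f i j k
  not_ignoresMerged : ¬ MinorIgnoresMerged f i j
  card_le : ∀ p q, p ≠ q → ¬ MinorIgnoresMerged f p q →
    #(ignoredVars f i j) ≤ #(ignoredVars f p q)

theorem exists_extremalTriple (hf : EveryMinorIgnores f) (hinv : ¬ PairInvariant f) :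
    ∃ i j k, ExtremalTriple f i j k := by
  classical
  simp only [PairInvariant, not_forall] at hinv
  obtain ⟨i₀, j₀, h₀⟩ := hinv
  obtain ⟨⟨i, j⟩, hij, hmin⟩ := exists_min_image
    (univ.filter fun p : Fin n × Fin n => p.1 ≠ p.2 ∧ ¬ MinorIgnoresMerged f p.1 p.2)
    (fun p => #(ignoredVars f p.1 p.2)) ⟨(i₀, j₀), by simpa using h₀⟩
  simp only [mem_filter_univ] at hij hmin
  obtain ⟨k, hk⟩ := (hf hij.1).resolve_left hij.2
  obtain ⟨hki, hkj, hk⟩ := mem_ignoredVars.1 hk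
  exact ⟨i, j, k, hij.1, hki.symm, hkj.symm, hk, hij.2, fun p q h h' => hmin (p, q) ⟨h, h'⟩⟩

namespace ExtremalTriple

theorem swap (t : ExtremalTriple f i j k) : ExtremalTriple f j i k where
  ne₁₂ := t.ne₁₂.symm
  ne₁₃ := t.ne₂₃
  ne₂₃ := t.ne₁₃
  ignores := t.ignores.symm
  not_ignoresMerged h := t.not_ignoresMerged h.symm
  card_le := ignoredVars_comm f i j ▸ t.card_le

theorem third_mem_ignoredVars (t : ExtremalTriple f i j k) : k ∈ ignoredVars f i j :=
  mem_ignoredVars.2 ⟨t.ne₁₃.symm, t.ne₂₃.symm, t.ignores⟩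

-- On tuples with `x i = x j` the entry at `k` is immaterial, so it may be set equal to that at `l`.
theorem minorIgnores_of_minorIgnores (t : ExtremalTriple f i j k) (hlk : l ≠ k) (hvi : v ≠ i)
    (hvj : v ≠ j) (h : MinorIgnores f k l v) : MinorIgnores f i j v := by
  intro x a hx
  have := t.ne₁₃
  have := t.ne₂₃
  calc f (update x v a) = f (update (update x k (x l)) v a) :=
        t.ignores.apply_eq (by grind [update_apply]) (by grind [update_apply])
    _ = f (update x k (x l)) := h _ _ (by grind [update_apply])
    _ = f x := t.ignores _ _ hx

theorem mem_or_mem_or_ignoresMerged (t : ExtremalTriple f i j k) (hlk : l ≠ k) :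
    i ∈ ignoredVars f k l ∨ j ∈ ignoredVars f k l ∨ MinorIgnoresMerged f k l := by
  by_contra! h
  obtain ⟨hi, hj, hmerged⟩ := h
  have hsub : ignoredVars f k l ⊆ (ignoredVars f i j).erase k := by
    intro v hv
    have hvi : v ≠ i := by rintro rfl; exact hi hv
    have hvj : v ≠ j := by rintro rfl; exact hj hv
    obtain ⟨hvk, -, hv⟩ := mem_ignoredVars.1 hv
    exact mem_erase.2 ⟨hvk, mem_ignoredVars.2
      ⟨hvi, hvj, t.minorIgnores_of_minorIgnores hlk hvi hvj hv⟩⟩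
  exact absurd (t.card_le k l hlk.symm hmerged)
    (not_le.2 ((card_le_card hsub).trans_lt (card_erase_lt_of_mem t.third_mem_ignoredVars)))

theorem ignores_or_ignoresMerged (t : ExtremalTriple f i j k) :
    MinorIgnores f i k j ∨ MinorIgnoresMerged f i k := by
  rcases t.mem_or_mem_or_ignoresMerged t.ne₁₃ with h | h | h
  · exact absurd rfl (mem_ignoredVars.1 h).2.1
  · exact .inl (mem_ignoredVars.1 h).2.2.symm
  · exact .inr h.symm

end ExtremalTriple

/-- The value of `f` as a function of its entries at `i, j, k, l`, the other entries being those of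
a parameter `x`. -/
def restrictFour (f : (Fin n → A) → B) (i j k l : Fin n) :
    A → A → A → A → (Fin n → A) → B :=
  fun a b c e x => f (update (update (update (update x i a) j b) k c) l e)

namespace ExtremalTriple

theorem tameAtLastPair_restrictFour (t : ExtremalTriple f i j k) (hlk : l ≠ k) :
    TameAtLastPair (restrictFour f i j k l) := by
  rcases t.mem_or_mem_or_ignoresMerged hlk with h | h | h
  · exact .inl fun a a' b e => funext fun x =>
      (mem_ignoredVars.1 h).2.2.apply_eq (by grind [update_apply]) (by grind [update_apply])
  · exact .inr <| .inl fun a b b' e => funext fun x =>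
      (mem_ignoredVars.1 h).2.2.apply_eq (by grind [update_apply]) (by grind [update_apply])
  · exact .inr <| .inr fun a b c e => funext fun x =>
      h.apply_eq (by grind [update_apply]) (by grind [update_apply]) (by grind [update_apply])

theorem restrictFour_eq_of_eq₁₂ (t : ExtremalTriple f i j k) (hli : l ≠ i) (hlj : l ≠ j)
    (a c e : A) : restrictFour f i j k l a a c e = restrictFour f i j k l a a a e := by
  have := t.ne₁₂
  have := t.ne₁₃
  have := t.ne₂₃
  exact funext fun x => t.ignores.apply_eq (by grind [update_apply]) (by grind [update_apply])

theorem restrictFour_diagonal_not_const (t : ExtremalTriple f i j k) (hli : l ≠ i) (hlj : l ≠ j) :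
    ¬ ∀ a b e, restrictFour f i j k l a a a e = restrictFour f i j k l b b b e := by
  intro h
  have := t.ne₁₂
  have := t.ne₁₃
  have := t.ne₂₃
  refine t.not_ignoresMerged fun x a hx => ?_
  calc f (update (update x i a) j a) = restrictFour f i j k l a a a (x l) x :=
        t.ignores.apply_eq (by grind [update_apply]) (by grind [update_apply])
    _ = restrictFour f i j k l (x i) (x i) (x i) (x l) x := congrFun (h _ _ _) x
    _ = f x := (t.ignores.apply_eq hx (by grind [update_apply])).symm

theorem isProjection_or (t : ExtremalTriple f i j k) (hli : l ≠ i) (hlj : l ≠ j) (hlk : l ≠ k) :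
    (MinorIgnores f i k j ∧ MinorIgnoresMerged f j k) ∨
      (MinorIgnores f j k i ∧ MinorIgnoresMerged f i k) := by
  have := t.ne₁₂
  have := t.ne₁₃
  have := t.ne₂₃
  have htame := t.tameAtLastPair_restrictFour hlk
  have h₁₂ := t.restrictFour_eq_of_eq₁₂ hli hlj
  rcases t.ignores_or_ignoresMerged with h₁₃ | h₁₃ <;>
    rcases t.swap.ignores_or_ignoresMerged with h₂₃ | h₂₃
  · refine absurd (htame.diagonal_const_of_majority h₁₂ (fun a b e => ?_) (fun a b e => ?_))
      (t.restrictFour_diagonal_not_const hli hlj)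
    · exact funext fun x => h₁₃.apply_eq (by grind [update_apply]) (by grind [update_apply])
    · exact funext fun x => h₂₃.apply_eq (by grind [update_apply]) (by grind [update_apply])
  · exact .inl ⟨h₁₃, h₂₃⟩
  · exact .inr ⟨h₂₃, h₁₃⟩
  · refine absurd (htame.diagonal_const_of_minority h₁₂ (fun a b e => ?_) (fun a b e => ?_))
      (t.restrictFour_diagonal_not_const hli hlj)
    · exact funext fun x => h₁₃.apply_eq (by grind [update_apply]) (by grind [update_apply])
        (by grind [update_apply])
    · exact funext fun x => h₂₃.apply_eq (by grind [update_apply]) (by grind [update_apply])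
        (by grind [update_apply])

end ExtremalTriple

/-- An extremal triple at which `f`, restricted to tuples with a coincidence among the entries at
`i, j, k`, reads off the entry at `i`. -/
structure ProjectionTriple (f : (Fin n → A) → B) (i j k : Fin n) : Prop
    extends ExtremalTriple f i j k where
  ignores₁₃ : MinorIgnores f i k j
  ignoresMerged₂₃ : MinorIgnoresMerged f j k

theorem exists_projectionTriple (hn : 4 ≤ n) (hf : EveryMinorIgnores f)
    (hinv : ¬ PairInvariant f) : ∃ i j k, ProjectionTriple f i j k := by
  obtain ⟨i, j, k, t⟩ := exists_extremalTriple hf hinv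
  obtain ⟨l, -, hl⟩ := exists_mem_notMem_of_card_lt_card (s := {i, j, k}) (t := univ)
    (card_le_three.trans_lt (by rw [card_fin]; exact hn))
  simp only [mem_insert, mem_singleton, not_or] at hl
  rcases t.isProjection_or hl.1 hl.2.1 hl.2.2 with h | h
  · exact ⟨i, j, k, t, h.1, h.2⟩
  · exact ⟨j, i, k, t.swap, h.1, h.2⟩

namespace ProjectionTriple

theorem rotate (t : ProjectionTriple f i j k) : ProjectionTriple f i k j where
  ne₁₂ := t.ne₁₃
  ne₁₃ := t.ne₁₂
  ne₂₃ := t.ne₂₃.symm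
  ignores := t.ignores₁₃
  ignores₁₃ := t.ignores
  ignoresMerged₂₃ := t.ignoresMerged₂₃.symm
  not_ignoresMerged hik := by
    refine t.not_ignoresMerged fun x a hx => ?_
    have := t.ne₁₂
    have := t.ne₁₃
    have := t.ne₂₃
    calc f (update (update x i a) j a) = f (update (update (update x i a) j a) k a) :=
          t.ignores.apply_eq (by grind [update_apply]) (by grind [update_apply])
      _ = f (update (update x i a) k a) :=
          t.ignores₁₃.apply_eq (by grind [update_apply]) (by grind [update_apply])
      _ = f (update x k (x i)) :=
          hik.apply_eq (by grind [update_apply]) (by grind [update_apply]) (by grind [update_apply])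
      _ = f x := t.ignores _ _ hx
  card_le p q hpq hp := by
    refine le_trans ?_ (t.card_le p q hpq hp)
    have hsub : ignoredVars f i k ⊆ insert j ((ignoredVars f i j).erase k) := by
      intro v hv
      obtain ⟨hvi, hvk, hv⟩ := mem_ignoredVars.1 hv
      rw [mem_insert, mem_erase, mem_ignoredVars]
      by_cases hvj : v = j
      · exact .inl hvj
      · exact .inr ⟨hvk, hvi, hvj, t.minorIgnores_of_minorIgnores t.ne₁₃ hvi hvj hv.symm⟩
    calc #(ignoredVars f i k) ≤ #((ignoredVars f i j).erase k) + 1 :=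
          (card_le_card hsub).trans (card_insert_le _ _)
      _ = #(ignoredVars f i j) := card_erase_add_one t.third_mem_ignoredVars

theorem eq_collapse_of_eq_third (t : ProjectionTriple f i j k) (hli : l ≠ i) (hlj : l ≠ j)
    (hlk : l ≠ k) {y : Fin n → A} (hy : y k = y l) :
    f y = f (update (update y j (y i)) k (y i)) := by
  have := t.ne₁₂
  have := t.ne₁₃
  have := t.ne₂₃
  have key : ∀ a b e, restrictFour f i j k l a b e e = restrictFour f i j k l a a a e := by
    refine (t.tameAtLastPair_restrictFour hlk).eq_diagonal_of_projection
      (t.restrictFour_diagonal_not_const hli hlj) (t.restrictFour_eq_of_eq₁₂ hli hlj)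
      (fun a b e => funext fun x => ?_) (fun a b e => funext fun x => ?_)
    · exact t.ignores₁₃.apply_eq (by grind [update_apply]) (by grind [update_apply])
    · exact t.ignoresMerged₂₃.apply_eq (by grind [update_apply]) (by grind [update_apply])
        (by grind [update_apply])
  convert congrFun (key (y i) (y j) (y l)) y using 1 <;>
  · simp only [restrictFour]
    congr 1
    grind [update_apply]

theorem eq_collapse_of_eq (t : ProjectionTriple f i j k) {y : Fin n → A} {m : Fin n}
    (hy : m ≠ j ∧ y j = y m ∨ m ≠ k ∧ y k = y m) :
    f y = f (update (update y j (y i)) k (y i)) := by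
  have := t.ne₁₂
  have := t.ne₁₃
  have := t.ne₂₃
  by_cases hij : y i = y j
  · exact t.ignores.apply_eq hij (by grind [update_apply])
  by_cases hik : y i = y k
  · exact t.ignores₁₃.apply_eq hik (by grind [update_apply])
  by_cases hjk : y j = y k
  · exact t.ignoresMerged₂₃.apply_eq hjk (by grind [update_apply]) (by grind [update_apply])
  have hmi : m ≠ i := by grind
  have hmj : m ≠ j := by grind
  have hmk : m ≠ k := by grind
  rcases hy with ⟨-, h⟩ | ⟨-, h⟩
  · rw [update_comm t.ne₂₃, t.rotate.eq_collapse_of_eq_third hmi hmk hmj h]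
  · exact t.eq_collapse_of_eq_third hmi hmj hmk h

theorem eq_of_eq_off (t : ProjectionTriple f i j k) {y z : Fin n → A} {m : Fin n} (hmj : m ≠ j)
    (hy : y j = y m) (hz : z j = z k) (hyz : ∀ l, l ≠ j → l ≠ k → y l = z l) : f y = f z := by
  rw [t.eq_collapse_of_eq (.inl ⟨hmj, hy⟩), t.eq_collapse_of_eq (.inl ⟨t.ne₂₃.symm, hz⟩)]
  congr 1
  have := hyz i t.ne₁₂ t.ne₁₃
  grind [update_apply]

theorem eq_collapse [Fintype A] (t : ProjectionTriple f i j k) (hA : Fintype.card A < n)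
    (hf : EveryMinorIgnores f) (y : Fin n → A) : f y = f (update (update y j (y i)) k (y i)) := by
  have := t.ne₁₂
  have := t.ne₁₃
  have := t.ne₂₃
  obtain ⟨p, q, hpq, hy⟩ := Fintype.exists_ne_map_eq_of_card_lt y (by simpa using hA)
  by_cases h : (p = j ∨ p = k) ∨ (q = j ∨ q = k)
  · rcases h with (rfl | rfl) | (rfl | rfl)
    · exact t.eq_collapse_of_eq (.inl ⟨hpq.symm, hy⟩)
    · exact t.eq_collapse_of_eq (.inr ⟨hpq.symm, hy⟩)
    · exact t.eq_collapse_of_eq (.inl ⟨hpq, hy.symm⟩)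
    · exact t.eq_collapse_of_eq (.inr ⟨hpq, hy.symm⟩)
  push Not at h
  obtain ⟨⟨hpj, hpk⟩, hqj, hqk⟩ := h
  set z := update (update y j (y i)) k (y i)
  have hzpq : z p = z q := by grind [update_apply]
  rcases hf hpq with h | ⟨v, hv⟩
  · rw [← h y (y j) hy, ← h z (y j) hzpq]
    exact t.eq_of_eq_off hpj (by grind [update_apply]) (by grind [update_apply])
      (by grind [update_apply])
  have h := (mem_ignoredVars.1 hv).2.2
  by_cases hvj : v = j
  · rw [← h y (y i) hy, hvj, t.eq_of_eq_off (m := i) (z := z)] <;> grind [update_apply]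
  by_cases hvk : v = k
  · rw [← h y (y j) hy, hvk, t.eq_of_eq_off (m := k) (z := z)] <;> grind [update_apply]
  · rw [← h y (y j) hy, ← h z (y j) hzpq]
    exact t.eq_of_eq_off hvj (by grind [update_apply]) (by grind [update_apply])
      (by grind [update_apply])

theorem not_essentialAt_second [Fintype A] (t : ProjectionTriple f i j k)
    (hA : Fintype.card A < n) (hf : EveryMinorIgnores f) : ¬ essentialAt f j := by
  refine not_essentialAt_iff.2 fun x a => ?_
  rw [t.eq_collapse hA hf, t.eq_collapse hA hf x, update_idem, update_of_ne t.ne₁₂]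

end ProjectionTriple

theorem EveryMinorIgnores.pairInvariant [Fintype A] (hn : 4 ≤ n) (hA : Fintype.card A < n)
    (hdep : ∀ i, essentialAt f i) (hf : EveryMinorIgnores f) : PairInvariant f := by
  by_contra hinv
  obtain ⟨i, j, k, t⟩ := exists_projectionTriple hn hf hinv
  exact t.not_essentialAt_second hA hf (hdep j)

end Willard

section Oddsupp

variable {n : ℕ} {A B M : Type*} [DecidableEq A] {f : (Fin n → A) → B}

theorem mem_oddsupp {x : Fin n → A} {a : A} : a ∈ oddsupp x ↔ Odd #{i | x i = a} := by
  simp only [oddsupp, mem_filter, mem_image, mem_univ, true_and, and_iff_right_iff_imp]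
  intro h
  obtain ⟨i, hi⟩ := card_pos.1 h.pos
  exact ⟨i, (mem_filter.1 hi).2⟩

theorem nsmul_eq_ite_odd [AddMonoid M] (hM : ∀ m : M, m + m = 0) (k : ℕ) (m : M) :
    k • m = if Odd k then m else 0 := by
  split_ifs with h
  · obtain ⟨l, rfl⟩ := h
    rw [succ_nsmul, mul_nsmul, two_nsmul, hM, nsmul_zero, zero_add]
  · obtain ⟨l, rfl⟩ := Nat.not_odd_iff_even.1 h
    rw [add_nsmul, hM]

theorem sum_oddsupp [AddCommMonoid M] (hM : ∀ m : M, m + m = 0) (g : A → M) (x : Fin n → A) :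
    ∑ a ∈ oddsupp x, g a = ∑ i, g (x i) := by
  rw [sum_comp g x, oddsupp, sum_filter]
  exact sum_congr rfl fun a _ => (nsmul_eq_ite_odd hM _ _).symm

theorem oddsupp_eq_of_forall_sum_eq {x y : Fin n → A}
    (h : ∀ g : A → ZMod 2, ∑ i, g (x i) = ∑ i, g (y i)) : oddsupp x = oddsupp y := by
  ext a
  have hcast : (#{i | x i = a} : ZMod 2) = #{i | y i = a} := by
    simpa only [natCast_card_filter] using h fun b => if b = a then 1 else 0
  rw [mem_oddsupp, mem_oddsupp, ← ZMod.natCast_eq_one_iff_odd, hcast, ZMod.natCast_eq_one_iff_odd]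

theorem oddsupp_comp_perm (x : Fin n → A) (σ : Equiv.Perm (Fin n)) :
    oddsupp (x ∘ σ) = oddsupp x :=
  oddsupp_eq_of_forall_sum_eq fun g => Equiv.sum_comp σ fun i => g (x i)

theorem pairInvariant_oddsupp : PairInvariant (oddsupp : (Fin n → A) → Finset A) := by
  intro i j hij x a hx
  refine oddsupp_eq_of_forall_sum_eq fun g => ?_
  rw [← CharTwo.add_eq_zero, ← sum_add_distrib, Fintype.sum_eq_add i j hij]
  · simp [update_of_ne hij, hx, CharTwo.add_self_eq_zero]
  · rintro m ⟨hmi, hmj⟩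
    simp [hmi, hmj, CharTwo.add_self_eq_zero]

theorem DeterminedByOddsupp.pairInvariant (hf : DeterminedByOddsupp f) : PairInvariant f := by
  obtain ⟨φ, hφ⟩ := hf
  intro i j hij x a hx
  rw [hφ, hφ, pairInvariant_oddsupp hij x a hx]

theorem exists_ne_eq_of_oddsupp_eq {x y : Fin n → A} {k : Fin n}
    (hxy : oddsupp x = oddsupp y) (hk : x k ≠ y k) (hy : ∀ m, y m = x k → x m = y m) :
    ∃ l, l ≠ k ∧ x l ≠ y l ∧ x l = x k := by
  by_contra! h
  have hins : univ.filter (x · = x k) = insert k (univ.filter (y · = x k)) := by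
    grind
  have hcard : #{m | x m = x k} = #{m | y m = x k} + 1 := by
    rw [hins, card_insert_of_notMem (by simpa using hk.symm)]
  have := Finset.ext_iff.1 hxy (x k)
  rw [mem_oddsupp, mem_oddsupp, hcard, Nat.odd_add_one] at this
  tauto

end Oddsupp

namespace PairInvariant

variable {n : ℕ} {A B : Type*} {f : (Fin n → A) → B}

theorem comp_swap_eq_of_eq (hf : PairInvariant f) {k l p : Fin n} (hpk : p ≠ k) (hpl : p ≠ l)
    {x : Fin n → A} (hx : x p = x k) : f (x ∘ Equiv.swap k l) = f x := by
  rcases eq_or_ne k l with rfl | hkl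
  · simp
  calc f (x ∘ Equiv.swap k l) = f (update (update x k (x l)) p (x l)) := by
        refine (hf hpl).apply_eq ?_ ?_ ?_ <;>
          grind [update_apply]
    _ = f x := hf hpk.symm x (x l) hx.symm

theorem comp_swap_eq [Fintype A] (hf : PairInvariant f) (hA : Fintype.card A < n) (k l : Fin n)
    (x : Fin n → A) : f (x ∘ Equiv.swap k l) = f x := by
  obtain ⟨p, q, hpq, hx⟩ := Fintype.exists_ne_map_eq_of_card_lt x (by simpa using hA)
  by_cases hk : ∃ r, r ≠ k ∧ r ≠ l ∧ (x r = x k ∨ x r = x l)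
  · obtain ⟨r, hrk, hrl, hr | hr⟩ := hk
    · exact hf.comp_swap_eq_of_eq hrk hrl hr
    · rw [Equiv.swap_comm]
      exact hf.comp_swap_eq_of_eq hrl hrk hr
  by_cases hpk : p = k ∨ p = l
  · congr 1
    grind
  have hqk : ¬ (q = k ∨ q = l) := by grind
  push Not at hpk hqk
  set y := update (update x p (x k)) q (x k)
  calc f (x ∘ Equiv.swap k l) = f (y ∘ Equiv.swap k l) :=
        (hf hpq).apply_eq (by grind) (by grind [update_apply]) (by grind [update_apply])
    _ = f y := hf.comp_swap_eq_of_eq hpk.1 hpk.2 (by grind [update_apply])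
    _ = f x := hf hpq x (x k) hx

theorem exists_eq_closer [Fintype A] [DecidableEq A] (hf : PairInvariant f)
    (hA : Fintype.card A < n) {x y : Fin n → A} (hxy : oddsupp x = oddsupp y) (hne : x ≠ y) :
    ∃ z, f z = f x ∧ oddsupp z = oddsupp x ∧ hammingDist z y < hammingDist x y := by
  suffices h : ∃ z k, f z = f x ∧ oddsupp z = oddsupp x ∧ x k ≠ y k ∧ z k = y k ∧
      ∀ m, x m = y m → z m = y m by
    obtain ⟨z, k, hfz, hoz, hxk, hzk, hz⟩ := h
    refine ⟨z, hfz, hoz, card_lt_card ⟨fun m => ?_, fun hsub => ?_⟩⟩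
    · simpa using mt (hz m)
    · simpa [hzk] using @hsub k (by simpa using hxk)
  by_cases hswap : ∃ k l, x k ≠ y k ∧ x l ≠ y l ∧ x l = y k
  · obtain ⟨k, l, hk, hl, hlk⟩ := hswap
    refine ⟨x ∘ Equiv.swap k l, k, hf.comp_swap_eq hA k l x, oddsupp_comp_perm x _, hk,
      by simpa using hlk, ?_⟩
    grind
  · push Not at hswap
    obtain ⟨k, hk⟩ := Function.ne_iff.1 hne
    obtain ⟨l, hlk, hl, hlx⟩ := exists_ne_eq_of_oddsupp_eq hxy hk (by grind)
    refine ⟨update (update x l (y k)) k (y k), k, hf hlk x _ hlx,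
      pairInvariant_oddsupp hlk x _ hlx, hk, by simp, ?_⟩
    grind [update_apply]

theorem eq_of_oddsupp_eq [Fintype A] [DecidableEq A] (hf : PairInvariant f)
    (hA : Fintype.card A < n) {x y : Fin n → A} (hxy : oddsupp x = oddsupp y) : f x = f y := by
  induction hd : hammingDist x y using Nat.strong_induction_on generalizing x with
  | _ d ih =>
  by_cases hne : x = y
  · rw [hne]
  obtain ⟨z, hfz, hoz, hlt⟩ := hf.exists_eq_closer hA hxy hne
  rw [← hfz]
  exact ih _ (hd ▸ hlt) (hoz.trans hxy) rfl

theorem determinedByOddsupp [Fintype A] [DecidableEq A] [Nonempty B] (hf : PairInvariant f)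
    (hA : Fintype.card A < n) : DeterminedByOddsupp f := by
  obtain ⟨φ, hφ⟩ := (factorsThrough_iff f).1 fun _ _ => hf.eq_of_oddsupp_eq hA
  exact ⟨φ, congrFun hφ⟩

end PairInvariant

section Gap

variable {n : ℕ} {A B : Type*} {f : (Fin n → A) → B}

theorem PairInvariant.eq_update_of_minorIgnores (hf : PairInvariant f) {k p q : Fin n}
    (hkp : k ≠ p) (hkq : k ≠ q) (hpq : p ≠ q) (h : MinorIgnores f p q k) {x : Fin n → A}
    (hx : x p = x k) : f (update x k (x q)) = f x := by
  set y := update (update x q (x k)) p (x k)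
  calc f (update x k (x q)) = f y :=
        (hf hkq).apply_eq (by grind [update_apply]) (by grind [update_apply])
          (by grind [update_apply])
    _ = f (update y k (x q)) := (h y _ (by grind [update_apply])).symm
    _ = f (update (update (update x k (x q)) q (x q)) p (x q)) :=
        (hf hpq).apply_eq (by grind [update_apply]) (by grind [update_apply])
          (by grind [update_apply])
    _ = f x := (hf hkp).apply_eq (by grind [update_apply]) (by grind [update_apply])
          (by grind [update_apply])

variable [Fintype A]

theorem PairInvariant.minorIgnores_of_minorIgnores (hf : PairInvariant f) (hA : Fintype.card A < n)
    {p q k v : Fin n} (hkp : k ≠ p) (hkq : k ≠ q) (hvp : v ≠ p) (hvq : v ≠ q)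
    (h : MinorIgnores f p q v) : MinorIgnores f p q k := by
  intro x a hx
  calc f (update x k a) = f (update x k a ∘ Equiv.swap k v) := (hf.comp_swap_eq hA k v _).symm
    _ = f (x ∘ Equiv.swap k v) := h.apply_eq (by grind [update_apply]) (by grind [update_apply])
    _ = f x := hf.comp_swap_eq hA k v x

theorem PairInvariant.exists_not_minorIgnores (hf : PairInvariant f) (hA : Fintype.card A < n)
    {k : Fin n} (hk : essentialAt f k) :
    ∃ p q, p ≠ q ∧ k ≠ p ∧ k ≠ q ∧ ¬ MinorIgnores f p q k := by
  by_contra! h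
  refine not_essentialAt_iff.2 (fun x a => ?_) hk
  obtain ⟨p, q, hpq, hx⟩ := Fintype.exists_ne_map_eq_of_card_lt x (by simpa using hA)
  obtain ⟨r, s, hrs, hy⟩ := Fintype.exists_ne_map_eq_of_card_lt (update x k a) (by simpa using hA)
  by_cases hkx : k ≠ p ∧ k ≠ q
  · exact h p q hpq hkx.1 hkx.2 x a hx
  by_cases hky : k ≠ r ∧ k ≠ s
  · exact h r s hrs hky.1 hky.2 x a (by grind [update_apply])
  obtain ⟨p', hkp, hp⟩ : ∃ p', k ≠ p' ∧ x p' = x k := by grind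
  obtain ⟨q', hkq, rfl⟩ : ∃ q', k ≠ q' ∧ x q' = a := by grind [update_apply]
  rcases eq_or_ne p' q' with rfl | hpq'
  · rw [hp, update_eq_self]
  · exact hf.eq_update_of_minorIgnores hkp hkq hpq' (h p' q' hpq' hkp hkq) hp

theorem PairInvariant.exists_ignoredVars_eq_empty (hf : PairInvariant f)
    (hA : Fintype.card A < n) {k : Fin n} (hk : essentialAt f k) :
    ∃ p q, p ≠ q ∧ ignoredVars f p q = ∅ := by
  obtain ⟨p, q, hpq, hkp, hkq, h⟩ := hf.exists_not_minorIgnores hA hk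
  refine ⟨p, q, hpq, eq_empty_of_forall_notMem fun v hv => h ?_⟩
  obtain ⟨hvp, hvq, hv⟩ := mem_ignoredVars.1 hv
  exact hf.minorIgnores_of_minorIgnores hA hkp hkq hvp hvq hv

theorem PairInvariant.arityGap_eq_two (hf : PairInvariant f) (hA : Fintype.card A < n)
    (hdep : ∀ i, essentialAt f i) : arityGap f = 2 := by
  obtain ⟨p, q, hpq, hempty⟩ := hf.exists_ignoredVars_eq_empty hA (hdep ⟨0, hA.pos⟩)
  exact arityGap_eq_of_forall_le hdep (fun i j hij => essArity_idMinor_add_two_le hij (hf hij))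
    ⟨p, q, hpq, le_essArity_idMinor_add_two hpq hempty⟩

theorem arityGap_eq_one_of_not_pairInvariant (hn : 4 ≤ n) (hA : Fintype.card A < n)
    (hdep : ∀ i, essentialAt f i) (hf : ¬ PairInvariant f) : arityGap f = 1 := by
  have hsome : ¬ EveryMinorIgnores f := mt (EveryMinorIgnores.pairInvariant hn hA hdep) hf
  simp only [EveryMinorIgnores, not_forall, not_or, not_nonempty_iff_eq_empty] at hsome
  obtain ⟨i, j, hij, hmerged, hempty⟩ := hsome
  exact arityGap_eq_of_forall_le hdep (fun i j hij => essArity_idMinor_add_one_le hij)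
    ⟨i, j, hij, le_essArity_idMinor_add_one hij hmerged hempty⟩

theorem arityGap_eq_two_iff_determinedByOddsupp [DecidableEq A] (hn : 4 ≤ n)
    (hA : Fintype.card A < n) (hdep : ∀ i, essentialAt f i) :
    arityGap f = 2 ↔ DeterminedByOddsupp f := by
  obtain ⟨x, -⟩ := hdep ⟨0, by omega⟩
  have : Nonempty B := ⟨f x⟩
  refine ⟨fun h => ?_, fun h => h.pairInvariant.arityGap_eq_two hA hdep⟩
  by_contra hf
  have hinv : ¬ PairInvariant f := fun hinv => hf (hinv.determinedByOddsupp hA)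
  rw [arityGap_eq_one_of_not_pairInvariant hn hA hdep hinv] at h
  contradiction

theorem arityGap_eq_two_or_one (hn : 4 ≤ n) (hA : Fintype.card A < n)
    (hdep : ∀ i, essentialAt f i) : arityGap f = 2 ∨ arityGap f = 1 :=
  (em (PairInvariant f)).imp (fun h => h.arityGap_eq_two hA hdep)
    (arityGap_eq_one_of_not_pairInvariant hn hA hdep)

end Gap

section OddsuppSums

open scoped symmDiff

variable {n : ℕ} {A M : Type*} [DecidableEq A]

theorem oddsupp_cons (a : A) (x : Fin n → A) :
    oddsupp (Fin.cons a x : Fin (n + 1) → A) = oddsupp x ∆ {a} := by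
  ext b
  simp only [mem_symmDiff, mem_singleton, mem_oddsupp, Fin.card_filter_univ_succ, Fin.cons_zero,
    Fin.cons_succ]
  grind

theorem odd_card_oddsupp (x : Fin n → A) : Odd #(oddsupp x) ↔ Odd n := by
  have h := sum_oddsupp CharTwo.add_self_eq_zero (fun _ => (1 : ZMod 2)) x
  simp only [sum_const, card_univ, Fintype.card_fin, nsmul_one] at h
  rw [← ZMod.natCast_eq_one_iff_odd, h, ZMod.natCast_eq_one_iff_odd]

theorem symmDiff_singleton_of_mem {S : Finset A} {a : A} (ha : a ∈ S) : S ∆ {a} = S.erase a := by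
  grind [mem_symmDiff]

theorem exists_oddsupp_eq [Nonempty A] {S : Finset A} (hS : #S ≤ n) (hodd : Odd #S ↔ Odd n) :
    ∃ x : Fin n → A, oddsupp x = S := by
  induction n generalizing S with
  | zero => exact ⟨Fin.elim0, by simp_all [oddsupp]⟩
  | succ n ih =>
    obtain ⟨a, ha⟩ : ∃ a, S = ∅ ∨ a ∈ S := by
      rcases S.eq_empty_or_nonempty with rfl | ⟨a, ha⟩
      · exact ⟨Classical.arbitrary A, .inl rfl⟩
      · exact ⟨a, .inr ha⟩
    obtain ⟨x, hx⟩ : ∃ x : Fin n → A, oddsupp x = S ∆ {a} := by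
      rcases ha with rfl | ha
      · have hn : Odd n := by grind
        have hcard : #((∅ : Finset A) ∆ {a}) = 1 := by
          rw [← bot_eq_empty, bot_symmDiff, card_singleton]
        exact ih (by grind) (by grind)
      · have hcard : #(S ∆ {a}) = #S - 1 := by
          rw [symmDiff_singleton_of_mem ha, card_erase_of_mem ha]
        exact ih (by grind) (by grind)
    exact ⟨Fin.cons a x, by rw [oddsupp_cons, hx, symmDiff_symmDiff_cancel_right]⟩

theorem sum_pairs_succ [AddCommMonoid M] (g : Fin (n + 1) → Fin (n + 1) → M) :
    ∑ i, ∑ j with i < j, g i j =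
      ∑ j : Fin n, g 0 j.succ + ∑ i : Fin n, ∑ j with i < j, g i.succ j.succ := by
  simp [sum_filter, Fin.sum_univ_succ, Fin.succ_lt_succ_iff]

theorem sum_pairs_const [AddCommMonoid M] (m : M) :
    ∑ i : Fin n, ∑ j with i < j, m = n.choose 2 • m := by
  induction n with
  | zero => simp
  | succ n ih =>
    rw [sum_pairs_succ, ih, Nat.choose_succ_succ' n 1, Nat.choose_one_right, add_nsmul]
    simp

theorem sum_sym2_insert [AddCommMonoid M] (T : Sym2 A → M) {a : A} {S : Finset A} (ha : a ∉ S) :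
    ∑ e ∈ (insert a S).sym2, T e = T s(a, a) + ∑ b ∈ S, T s(a, b) + ∑ e ∈ S.sym2, T e := by
  rw [← cons_eq_insert a S ha, sym2_cons, sum_disjUnion, sum_map, sum_cons]
  rfl

theorem sum_sym2_oddsupp [AddCommMonoid M] (hM : ∀ m : M, m + m = 0) {T : Sym2 A → M}
    (hT : ∀ a, T s(a, a) = 0) (x : Fin n → A) :
    ∑ e ∈ (oddsupp x).sym2, T e = ∑ i, ∑ j with i < j, T s(x i, x j) := by
  induction n with
  | zero => simp [oddsupp]
  | succ n ih =>
    cases x using Fin.consCases with | cons a x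
    simp only [sum_pairs_succ, Fin.cons_zero, Fin.cons_succ, ← ih x,
      ← sum_oddsupp hM (fun b => T s(a, b)) x, oddsupp_cons]
    by_cases ha : a ∈ oddsupp x
    · rw [symmDiff_singleton_of_mem ha]
      nth_rw 2 3 [← insert_erase ha]
      rw [sum_sym2_insert T (notMem_erase a _), sum_insert (notMem_erase a _), hT, zero_add,
        ← add_assoc, hM, zero_add]
    · have hS : oddsupp x ∆ {a} = insert a (oddsupp x) := by grind [mem_symmDiff]
      rw [hS, sum_sym2_insert T ha, hT, zero_add]

end OddsuppSums

section ThreeElementField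

variable {n : ℕ} (q : ZMod 3 × ZMod 3 × ZMod 3 × ZMod 3)

/-- The polynomial `p(t) = a·t² + b·t + c` for the parameters `q = (a, b, c, d)`. -/
def quadPoly (t : ZMod 3) : ZMod 3 :=
  q.1 * t ^ 2 + q.2.1 * t + q.2.2.1

/-- The value at the tuples `x` with `oddsupp x = S` of the function given by the formula with
parameters `q = (a, b, c, d)`. -/
def z3Value (S : Finset (ZMod 3)) : ZMod 3 :=
  if S = ∅ ∨ S = univ then q.2.2.2 else quadPoly q (∑ a ∈ S, a) + q.2.2.2

/-- The summand of an unordered pair `{u, v}` in the formula, shifted by `{d}` so as to vanish for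
`u = v`. -/
def pairTerm : Sym2 (ZMod 3) → AsBoolRing (Set (ZMod 3)) :=
  Sym2.lift ⟨fun u v => sing ((u - v) ^ 2 * quadPoly q (u + v) + q.2.2.2) + sing q.2.2.2,
    fun u v => by simp only [add_comm u v, sub_sq_comm u v]⟩

theorem sing_injective : Function.Injective sing :=
  toBoolRing.injective.comp Set.singleton_injective

theorem pairTerm_mk (u v : ZMod 3) : pairTerm q s(u, v) =
    sing ((u - v) ^ 2 * quadPoly q (u + v) + q.2.2.2) + sing q.2.2.2 :=
  rfl

theorem pairTerm_diag (u : ZMod 3) : pairTerm q s(u, u) = 0 := by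
  simp [pairTerm_mk, BooleanRing.add_self]

theorem pairTerm_of_ne {u v : ZMod 3} (h : u ≠ v) :
    pairTerm q s(u, v) = sing (quadPoly q (u + v) + q.2.2.2) + sing q.2.2.2 := by
  have hsq : (u - v) ^ 2 = 1 := ZMod.pow_card_sub_one_eq_one (sub_ne_zero.2 h)
  rw [pairTerm_mk, hsq, one_mul]

theorem sum_pairs_sing (x : Fin n → ZMod 3) :
    ∑ i, ∑ j with i < j, sing ((x i - x j) ^ 2 * quadPoly q (x i + x j) + q.2.2.2) =
      ∑ e ∈ (oddsupp x).sym2, pairTerm q e + n.choose 2 • sing q.2.2.2 := by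
  rw [sum_sym2_oddsupp BooleanRing.add_self (pairTerm_diag q), ← sum_pairs_const]
  simp_rw [← sum_add_distrib, pairTerm_mk, add_assoc, BooleanRing.add_self, add_zero]

theorem odd_choose_two_iff (n : ℕ) : Odd (n.choose 2) ↔ n % 4 = 2 ∨ n % 4 = 3 := by
  induction n with
  | zero => simp
  | succ n ih =>
    rw [Nat.choose_succ_succ' n 1, Nat.choose_one_right]
    grind

theorem z3Cond_iff_forall_sing_eq (f : (Fin n → ZMod 3) → ZMod 3) :
    z3Cond f q ↔ ∀ x, sing (f x) = ∑ e ∈ (oddsupp x).sym2, pairTerm q e +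
      if Odd n then ∑ a ∈ oddsupp x, sing (quadPoly q a + q.2.2.2) else sing q.2.2.2 := by
  have h4 : n % 4 < 4 := Nat.mod_lt _ (by norm_num)
  have hodd : Odd n ↔ n % 4 = 1 ∨ n % 4 = 3 := by grind
  have hquad : ∀ t, q.1 * t ^ 2 + q.2.1 * t + q.2.2.1 = quadPoly q t := fun _ => rfl
  simp only [sum_oddsupp BooleanRing.add_self, z3Cond, hquad, sum_pairs_sing,
    nsmul_eq_ite_odd BooleanRing.add_self, odd_choose_two_iff, hodd]
  have hcancel : ∀ m, m + sing q.2.2.2 + sing q.2.2.2 = m := fun m => by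
    rw [add_assoc, BooleanRing.add_self, add_zero]
  generalize n % 4 = r at h4
  interval_cases r <;> simp [add_right_comm _ (sing q.2.2.2), hcancel]

theorem z3Value_empty : z3Value q ∅ = q.2.2.2 := by
  simp [z3Value]

theorem z3Value_univ : z3Value q univ = q.2.2.2 := by
  simp [z3Value]

theorem z3Value_singleton (t : ZMod 3) : z3Value q {t} = quadPoly q t + q.2.2.2 := by
  have hne : ∀ t : ZMod 3, ({t} : Finset (ZMod 3)) ≠ univ := by decide
  simp [z3Value, hne]

theorem z3Value_pair {u v : ZMod 3} (h : u ≠ v) :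
    z3Value q {u, v} = quadPoly q (u + v) + q.2.2.2 := by
  have hne : ∀ u v : ZMod 3, ({u, v} : Finset (ZMod 3)) ≠ univ := by decide
  simp [z3Value, hne, h]

theorem eq_empty_or_eq_pair_of_even_card {S : Finset (ZMod 3)} (hS : Even #S) :
    S = ∅ ∨ ∃ t, S = {1 - t, -1 - t} := by
  revert S
  decide

theorem eq_univ_or_eq_singleton_of_odd_card {S : Finset (ZMod 3)} (hS : Odd #S) :
    S = univ ∨ ∃ t, S = {t} := by
  revert S
  decide

theorem sum_pairTerm_add_of_even {S : Finset (ZMod 3)} (hS : Even #S) :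
    ∑ e ∈ S.sym2, pairTerm q e + sing q.2.2.2 = sing (z3Value q S) := by
  rcases eq_empty_or_eq_pair_of_even_card hS with rfl | ⟨t, rfl⟩
  · simp [z3Value_empty]
  · have hne : ∀ t : ZMod 3, 1 - t ≠ -1 - t := by decide
    rw [z3Value_pair q (hne t), sum_sym2_insert _ (by simpa using hne t)]
    simp [Sym2.diag, pairTerm_diag, pairTerm_of_ne q (hne t), add_assoc, BooleanRing.add_self]

theorem sum_pairTerm_add_univ :
    ∑ e ∈ (univ : Finset (ZMod 3)).sym2, pairTerm q e + ∑ a, sing (quadPoly q a + q.2.2.2) =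
      sing q.2.2.2 := by
  have h01 : pairTerm q s(0, 1) = sing (quadPoly q 1 + q.2.2.2) + sing q.2.2.2 :=
    pairTerm_of_ne q (by decide)
  have h02 : pairTerm q s(0, 2) = sing (quadPoly q 2 + q.2.2.2) + sing q.2.2.2 :=
    pairTerm_of_ne q (by decide)
  have h12 : pairTerm q s(1, 2) = sing (quadPoly q 0 + q.2.2.2) + sing q.2.2.2 :=
    pairTerm_of_ne q (by decide)
  have huniv : (univ : Finset (ZMod 3)) = {0, 1, 2} := rfl
  have h0 : (0 : ZMod 3) ∉ ({1, 2} : Finset (ZMod 3)) := by decide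
  have h1 : (1 : ZMod 3) ∉ ({2} : Finset (ZMod 3)) := by decide
  simp only [huniv, sum_sym2_insert _ h0, sum_sym2_insert _ h1, sum_insert h0, sum_insert h1,
    sum_singleton, sym2_singleton, Sym2.diag, pairTerm_diag, h01, h02, h12]
  linear_combination BooleanRing.add_self (sing (quadPoly q 0 + q.2.2.2) +
    sing (quadPoly q 1 + q.2.2.2) + sing (quadPoly q 2 + q.2.2.2) + sing q.2.2.2)

theorem sum_pairTerm_add_of_odd {S : Finset (ZMod 3)} (hS : Odd #S) :
    ∑ e ∈ S.sym2, pairTerm q e + ∑ a ∈ S, sing (quadPoly q a + q.2.2.2) = sing (z3Value q S) := by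
  rcases eq_univ_or_eq_singleton_of_odd_card hS with rfl | ⟨t, rfl⟩
  · rw [sum_pairTerm_add_univ, z3Value_univ]
  · rw [z3Value_singleton]
    simp [Sym2.diag, pairTerm_diag]

theorem z3Cond_iff (f : (Fin n → ZMod 3) → ZMod 3) :
    z3Cond f q ↔ ∀ x, f x = z3Value q (oddsupp x) := by
  refine (z3Cond_iff_forall_sing_eq q f).trans (forall_congr' fun x => ?_)
  have hn := odd_card_oddsupp x
  rw [← sing_injective.eq_iff]
  split_ifs with h
  · rw [sum_pairTerm_add_of_odd q (hn.2 h)]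
  · rw [sum_pairTerm_add_of_even q (Nat.not_odd_iff_even.1 (mt hn.1 h))]

theorem existsUnique_quadPoly_eq (g : ZMod 3 → ZMod 3) (e : ZMod 3) :
    ∃! q, e = q.2.2.2 ∧ ∀ t, g t = quadPoly q t + q.2.2.2 := by
  have h3 : (3 : ZMod 3) = 0 := rfl
  have hcases : ∀ t : ZMod 3, t = 0 ∨ t = 1 ∨ t = 2 := by decide
  refine ⟨(-(g 0 + g 1 + g 2), g 2 - g 1, g 0 - e, e), ⟨rfl, fun t => ?_⟩, ?_⟩
  · rcases hcases t with rfl | rfl | rfl <;> simp only [quadPoly]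
    · ring
    · linear_combination (g 1) * h3
    · linear_combination (g 0 + 2 * g 1 + g 2) * h3
  · rintro ⟨a, b, c, d⟩ ⟨rfl, h⟩
    simp only [quadPoly] at h
    simp only [h, Prod.mk.injEq, and_true]
    refine ⟨?_, ?_, ?_⟩
    · linear_combination (2 * a + b + c + e) * h3
    · linear_combination -a * h3
    · ring

theorem existsUnique_z3Value_eq (φ : Finset (ZMod 3) → ZMod 3) (n : ℕ) :
    ∃! q, ∀ S, (Odd #S ↔ Odd n) → φ S = z3Value q S := by
  rcases n.even_or_odd with hn | hn
  · have hne : ∀ t : ZMod 3, 1 - t ≠ -1 - t := by decide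
    have hadd : ∀ t : ZMod 3, 1 - t + (-1 - t) = t := by decide
    have hpair : ∀ q t, z3Value q {1 - t, -1 - t} = quadPoly q t + q.2.2.2 := fun q t => by
      rw [z3Value_pair q (hne t), hadd]
    convert! existsUnique_quadPoly_eq (fun t => φ {1 - t, -1 - t}) (φ ∅) using 2 with q
    simp_rw [← hpair, ← z3Value_empty q]
    refine ⟨fun h => ⟨h _ (by simpa using hn), fun t => h _ ?_⟩, fun h S hS => ?_⟩
    · rw [card_pair (hne t)]
      exact iff_of_false (by decide) (Nat.not_odd_iff_even.2 hn)
    · obtain rfl | ⟨t, rfl⟩ := eq_empty_or_eq_pair_of_even_card (S := S) (by grind)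
      exacts [h.1, h.2 t]
  · convert! existsUnique_quadPoly_eq (fun t => φ {t}) (φ univ) using 2 with q
    simp_rw [← z3Value_singleton, ← z3Value_univ q]
    refine ⟨fun h => ⟨h _ (iff_of_true (by decide) hn), fun t => h _ (by simpa using hn)⟩,
      fun h S hS => ?_⟩
    obtain rfl | ⟨t, rfl⟩ := eq_univ_or_eq_singleton_of_odd_card (hS.2 hn)
    exacts [h.1, h.2 t]

theorem existsUnique_z3Cond_iff (hn : 3 ≤ n) {f : (Fin n → ZMod 3) → ZMod 3} :
    (∃! q, z3Cond f q) ↔ DeterminedByOddsupp f := by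
  simp only [z3Cond_iff]
  refine ⟨fun ⟨q, hq, _⟩ => ⟨z3Value q, hq⟩, fun ⟨φ, hφ⟩ => ?_⟩
  convert! existsUnique_z3Value_eq φ n using 2 with q
  refine ⟨fun h S hS => ?_, fun h x => (hφ x).trans (h _ (odd_card_oddsupp x))⟩
  obtain ⟨x, rfl⟩ := exists_oddsupp_eq ((card_le_univ S).trans hn) hS
  rw [← hφ, h]

end ThreeElementField

theorem z3_arity_gap_classification {n : ℕ} (hn : 4 ≤ n)
    (f : (Fin n → ZMod 3) → ZMod 3) (hdep : ∀ i, essentialAt f i) :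
    (arityGap f = 2 ↔ ∃! q : ZMod 3 × ZMod 3 × ZMod 3 × ZMod 3, z3Cond f q) ∧
    (arityGap f = 2 ∨ arityGap f = 1) := by
  have hA : Fintype.card (ZMod 3) < n := by rw [ZMod.card]; omega
  exact ⟨(arityGap_eq_two_iff_determinedByOddsupp hn hA hdep).trans
    (existsUnique_z3Cond_iff (by omega)).symm, arityGap_eq_two_or_one hn hA hdep⟩
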